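/- Let R be a right artinian ring with φ-dim(R) = 0. Then every indecomposable projective right R-module has simple socle. -/

import Mathlib

open Module Function

universe u

variable (R : Type u) [Ring R]

/-- A finitely generated right `R`-module, encoded as a module over `Rᵐᵒᵖ`. -/
structure FGMod where
  carrier : Type u
  [isAddCommGroup : AddCommGroup carrier]
  [isModule : Module Rᵐᵒᵖ carrier]
  [isFinite : Module.Finite Rᵐᵒᵖ carrier]

attribute [instance] FGMod.isAddCommGroup FGMod.isModule FGMod.isFinite

instance : CoeSort (FGMod R) (Type u) := ⟨FGMod.carrier⟩

variable {R}

/-- Isomorphism of f.g. right modules. -/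
def FGMod.Iso (M N : FGMod R) : Prop := Nonempty (M ≃ₗ[Rᵐᵒᵖ] N)

/-- Direct sum. -/
def FGMod.prod (M N : FGMod R) : FGMod R := ⟨M × N⟩

/-- `M^k`, the direct sum of `k` copies of `M`. -/
def FGMod.pow (M : FGMod R) (k : ℕ) : FGMod R := ⟨Fin k → M⟩

/-- `N` is (isomorphic to) a direct summand of `M`. -/
def FGMod.IsSummand (N M : FGMod R) : Prop :=
  ∃ A B : Submodule Rᵐᵒᵖ M, IsCompl A B ∧ Nonempty (N ≃ₗ[Rᵐᵒᵖ] A)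

/-- `M` is indecomposable. -/
def FGMod.Indec (M : FGMod R) : Prop :=
  Nontrivial M ∧ ∀ A B : Submodule Rᵐᵒᵖ M, IsCompl A B → A = ⊥ ∨ B = ⊥

/-- `M` is projective. -/
def FGMod.Proj (M : FGMod R) : Prop := Module.Projective Rᵐᵒᵖ M

/-- `f : P → M` is a projective cover: `P` projective, `f` surjective with superfluous kernel. -/
def IsProjCover (M P : FGMod R) (f : P →ₗ[Rᵐᵒᵖ] M) : Prop :=
  P.Proj ∧ Surjective f ∧ ∀ N : Submodule Rᵐᵒᵖ P, N ⊔ LinearMap.ker f = ⊤ → N = ⊤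

/-- `N` is a (first) syzygy of `M`: the kernel of a projective cover of `M`. -/
def IsSyzygy (M N : FGMod R) : Prop :=
  ∃ (P : FGMod R) (f : P →ₗ[Rᵐᵒᵖ] M),
    IsProjCover M P f ∧ Nonempty (N ≃ₗ[Rᵐᵒᵖ] LinearMap.ker f)

/-- `N` is an `n`-th syzygy of `M`. -/
def IsSyzygyN : ℕ → FGMod R → FGMod R → Prop
  | 0, M, N => M.Iso N
  | n+1, M, N => ∃ L, IsSyzygy M L ∧ IsSyzygyN n L N

/-- `M` has projective dimension at most `n`. -/
def HasPdLE : ℕ → FGMod R → Prop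
  | 0, M => M.Proj
  | n+1, M => M.Proj ∨ ∃ N, IsSyzygy M N ∧ HasPdLE n N

/-- `M` has finite projective dimension. -/
def FinPd (M : FGMod R) : Prop := ∃ n, HasPdLE n M

/-- The projective dimension of `M` (junk value if infinite). -/
noncomputable def pdIT (M : FGMod R) : ℕ := sInf {n | HasPdLE n M}

variable (R)

/-- The Igusa–Todorov relations in the free abelian group on f.g. right modules:
`[A] - [B] - [C]` whenever `A ≅ B ⊕ C`, and `[P]` for `P` projective. -/
def ITRel : Set (FreeAbelianGroup (FGMod R)) :=
  {x | ∃ A B C : FGMod R, Nonempty (A ≃ₗ[Rᵐᵒᵖ] (B × C : Type u)) ∧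
        x = FreeAbelianGroup.of A - FreeAbelianGroup.of B - FreeAbelianGroup.of C} ∪
  {x | ∃ P : FGMod R, P.Proj ∧ x = FreeAbelianGroup.of P}

/-- The Igusa–Todorov group `K`. -/
def ITK := FreeAbelianGroup (FGMod R) ⧸ AddSubgroup.closure (ITRel R)

noncomputable instance : AddCommGroup (ITK R) :=
  QuotientAddGroup.Quotient.addCommGroup _

/-- The class `[M]` in `K`. -/
noncomputable def ITcls (M : FGMod R) : ITK R := QuotientAddGroup.mk (FreeAbelianGroup.of M)

/-- `⟨M⟩`: the subgroup of `K` generated by the indecomposable non-projective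
direct summands of `M`. -/
noncomputable def ITgen (M : FGMod R) : AddSubgroup (ITK R) :=
  AddSubgroup.closure
    {x | ∃ N : FGMod R, N.IsSummand M ∧ N.Indec ∧ ¬N.Proj ∧ x = ITcls R N}

/-- The rank of a subgroup of `K`. -/
noncomputable def rkIT (H : AddSubgroup (ITK R)) : ℕ :=
  Module.finrank ℤ (AddSubgroup.toIntSubmodule H)

/-- `OmK` is a syzygy endomorphism of `K`: a group endomorphism sending `[M]` to `[ΩM]`. -/
def IsSyzygyEnd (OmK : AddMonoid.End (ITK R)) : Prop :=
  ∀ M N : FGMod R, IsSyzygy M N → OmK (ITcls R M) = ITcls R N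

/-- The Igusa–Todorov function `φ`: the least `n` such that the rank of
`Ω^i⟨M⟩` equals that of `Ω^n⟨M⟩` for all `i ≥ n`. -/
noncomputable def phiIT (OmK : AddMonoid.End (ITK R)) (M : FGMod R) : ℕ :=
  sInf {n | ∀ i, n ≤ i →
    rkIT R ((ITgen R M).map ((OmK ^ i : AddMonoid.End (ITK R)) : ITK R →+ ITK R))
      = rkIT R ((ITgen R M).map ((OmK ^ n : AddMonoid.End (ITK R)) : ITK R →+ ITK R))}

/-- The second Igusa–Todorov function `ψ`. -/
noncomputable def psiIT (OmK : AddMonoid.End (ITK R)) (M : FGMod R) : ℕ :=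
  phiIT R OmK M + sSup {d | ∃ N X : FGMod R, IsSyzygyN (phiIT R OmK M) M N ∧
      X.IsSummand N ∧ FinPd X ∧ d = pdIT X}

/-- The socle of a module: the sum of its simple submodules. -/
def socleIT (M : FGMod R) : Submodule Rᵐᵒᵖ M :=
  sSup {S : Submodule Rᵐᵒᵖ M | IsSimpleModule Rᵐᵒᵖ S}


/-!
Let `L₁` and `L₂` be nonzero submodules of an indecomposable projective module `P` with
`L₁ ∩ L₂ = 0`. The endomorphism ring of `P` is local, so every proper submodule `L` of `P` is
superfluous: `P ⧸ L` is indecomposable with projective cover `P`, and `Ω (P ⧸ L) = L`. As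
`L₁ + L₂ = L₁ ⊕ L₂`, the element `[P ⧸ L₁] + [P ⧸ L₂] - [P ⧸ (L₁ + L₂)]` of `K` is killed by `Ω`.
If `φ` vanishes then `Ω` preserves the rank of `⟨M⟩` for every `M`, so that all elements of `⟨M⟩`
killed by `Ω` are torsion. The element above is not: counting the summands isomorphic to
`P ⧸ (L₁ + L₂)` defines a homomorphism `K → ℤ` sending it to `-1`. So any two nonzero submodules of
`P` meet, and the socle of `P` is simple.
-/

lemma isDedekindFiniteMonoid_of_isLocalRing (A : Type*) [Ring A] [IsLocalRing A] :
    IsDedekindFiniteMonoid A where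
  mul_eq_one_symm {a b} hab := by
    have hba : IsIdempotentElem (b * a) := by
      rw [IsIdempotentElem, mul_assoc, ← mul_assoc a, hab, one_mul]
    rcases IsLocalRing.isUnit_or_isUnit_of_add_one (add_sub_cancel (b * a) 1) with hu | hu
    · exact (IsIdempotentElem.iff_eq_one_of_isUnit hu).1 hba
    · have hzero : b * a = 0 := by
        simpa using (IsIdempotentElem.iff_eq_one_of_isUnit hu).1 hba.one_sub
      have : (1 : A) = 0 := calc
        (1 : A) = a * (b * a) * b := by rw [← mul_assoc, hab, one_mul, hab]
        _ = 0 := by rw [hzero, mul_zero, zero_mul]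
      exact absurd this one_ne_zero

lemma isAtom_sSup_setOf_isAtom {α : Type*} [CompleteLattice α] [IsAtomic α] [Nontrivial α]
    (h : ∀ a b : α, Disjoint a b → a = ⊥ ∨ b = ⊥) : IsAtom (sSup {a : α | IsAtom a}) := by
  obtain ⟨a, ha⟩ := IsAtomic.exists_atom α
  have hunique (b : α) (hb : IsAtom b) : b = a := by
    by_contra hne
    exact (h b a (hb.disjoint_of_ne ha hne)).elim hb.1 ha.1
  rwa [show {b : α | IsAtom b} = {a} from Set.ext fun b => ⟨hunique b, fun hb => hb ▸ ha⟩,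
    sSup_singleton]

section Modules

variable {S : Type*} [Ring S] {X M N : Type*} [AddCommGroup X] [Module S X]
  [AddCommGroup M] [Module S M] [AddCommGroup N] [Module S N]

variable (S X) in
/-- A module is indecomposable if it is nonzero and not the direct sum of two nonzero submodules.
For finitely generated right modules this unfolds to `FGMod.Indec`. -/
def IsIndecomposable : Prop :=
  Nontrivial X ∧ ∀ A B : Submodule S X, IsCompl A B → A = ⊥ ∨ B = ⊥

variable (S X M) in
/-- `X` is a retract of `M`, i.e. isomorphic to a direct summand of `M`. -/
def IsRetract : Prop :=
  ∃ (f : X →ₗ[S] M) (g : M →ₗ[S] X), g ∘ₗ f = LinearMap.id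

lemma isCompl_range_ker_of_comp_eq_id {f : X →ₗ[S] M} {g : M →ₗ[S] X}
    (h : g ∘ₗ f = LinearMap.id) : IsCompl (LinearMap.range f) (LinearMap.ker g) := by
  have hgf : LeftInverse g f := LinearMap.congr_fun h
  have hidem : IsIdempotentElem (f ∘ₗ g) := by
    rw [IsIdempotentElem, Module.End.mul_eq_comp, LinearMap.comp_assoc, ← LinearMap.comp_assoc g,
      h, LinearMap.id_comp]
  simpa [LinearMap.range_comp_of_range_eq_top f (LinearMap.range_eq_top.2 hgf.surjective),
    LinearMap.ker_comp_of_ker_eq_bot g (LinearMap.ker_eq_bot.2 hgf.injective)] using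
    LinearMap.IsIdempotentElem.isCompl hidem

lemma exists_comp_eq_id_of_isUnit {f : X →ₗ[S] M} {g : M →ₗ[S] X}
    (h : IsUnit (g ∘ₗ f : Module.End S X)) : ∃ f' : X →ₗ[S] M, g ∘ₗ f' = LinearMap.id := by
  obtain ⟨u, hu⟩ := h
  refine ⟨f ∘ₗ (↑u⁻¹ : Module.End S X), ?_⟩
  rw [← LinearMap.comp_assoc, ← hu]
  exact u.mul_inv

/-! ### Indecomposable modules and retracts -/

lemma IsIndecomposable.isUnit_or_isNilpotent [IsArtinian S X] [IsNoetherian S X]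
    (hX : IsIndecomposable S X) (e : Module.End S X) : IsUnit e ∨ IsNilpotent e := by
  obtain ⟨n, hcompl, hn⟩ := (e.eventually_isCompl_ker_pow_range_pow.and
    (Filter.eventually_ge_atTop 1)).exists
  rcases hX.2 _ _ hcompl with hker | hrange
  · have hbij : Bijective (e ^ n) :=
      IsArtinian.bijective_of_injective_endomorphism _ (LinearMap.ker_eq_bot.1 hker)
    have hunit : IsUnit (e ^ n) := (Module.End.isUnit_iff _).2 hbij
    exact Or.inl ((isUnit_pow_iff (Nat.one_le_iff_ne_zero.1 hn)).1 hunit)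
  · exact Or.inr ⟨n, LinearMap.range_eq_bot.1 hrange⟩

lemma IsIndecomposable.isLocalRing_end [IsArtinian S X] [IsNoetherian S X]
    (hX : IsIndecomposable S X) : IsLocalRing (Module.End S X) := by
  have := hX.1
  exact IsLocalRing.of_isUnit_or_isUnit_one_sub_self fun e =>
    (hX.isUnit_or_isNilpotent e).imp_right IsNilpotent.isUnit_one_sub

lemma isRetract_of_linearEquiv (e : X ≃ₗ[S] M) : IsRetract S X M :=
  ⟨e, e.symm, by ext; simp⟩

lemma IsRetract.trans (hXM : IsRetract S X M) (hMN : IsRetract S M N) : IsRetract S X N := by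
  obtain ⟨f, g, hgf⟩ := hXM
  obtain ⟨f', g', hgf'⟩ := hMN
  refine ⟨f' ∘ₗ f, g ∘ₗ g', ?_⟩
  rw [LinearMap.comp_assoc, ← LinearMap.comp_assoc f, hgf', LinearMap.id_comp, hgf]

lemma isRetract_prod_left : IsRetract S M (M × N) :=
  ⟨LinearMap.inl S M N, LinearMap.fst S M N, LinearMap.fst_comp_inl ..⟩

lemma isRetract_prod_right : IsRetract S N (M × N) :=
  ⟨LinearMap.inr S M N, LinearMap.snd S M N, LinearMap.snd_comp_inr ..⟩

lemma IsRetract.projective [Module.Projective S M] (h : IsRetract S X M) :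
    Module.Projective S X :=
  let ⟨f, g, hgf⟩ := h
  Module.Projective.of_split f g hgf

lemma not_isRetract_of_subsingleton [Nontrivial X] [Subsingleton M] : ¬IsRetract S X M := by
  rintro ⟨f, g, hgf⟩
  have hinj : Injective f := LeftInverse.injective (LinearMap.congr_fun hgf)
  exact not_subsingleton X hinj.subsingleton

lemma IsRetract.nonempty_equiv [Nontrivial X] (hM : IsIndecomposable S M)
    (h : IsRetract S X M) : Nonempty (X ≃ₗ[S] M) := by
  obtain ⟨f, g, hgf⟩ := h
  have hinv : LeftInverse g f := LinearMap.congr_fun hgf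
  rcases hM.2 _ _ (isCompl_range_ker_of_comp_eq_id hgf) with hrange | hker
  · have : Subsingleton (LinearMap.range f) := by rw [hrange]; infer_instance
    exact absurd (LinearEquiv.ofInjective f hinv.injective).toEquiv.subsingleton
      (not_subsingleton X)
  · exact ⟨(LinearEquiv.ofBijective g ⟨LinearMap.ker_eq_bot.1 hker, hinv.surjective⟩).symm⟩

lemma IsRetract.of_prod [IsLocalRing (Module.End S X)] (h : IsRetract S X (M × N)) :
    IsRetract S X M ∨ IsRetract S X N := by
  obtain ⟨f, g, hgf⟩ := h
  have hsum : ((g ∘ₗ .inl S M N) ∘ₗ (.fst S M N ∘ₗ f) : Module.End S X) +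
      (g ∘ₗ .inr S M N) ∘ₗ (.snd S M N ∘ₗ f) = 1 := by
    rw [Module.End.one_eq_id, ← hgf]
    ext x
    simp [← map_add]
  rcases IsLocalRing.isUnit_or_isUnit_of_add_one hsum with hu | hu
  · exact Or.inl (let ⟨f', hf'⟩ := exists_comp_eq_id_of_isUnit hu; ⟨f', _, hf'⟩)
  · exact Or.inr (let ⟨f', hf'⟩ := exists_comp_eq_id_of_isUnit hu; ⟨f', _, hf'⟩)

/-! ### Quotients of projective modules with local endomorphism ring -/

section Quotients

variable [Module.Projective S X] [IsLocalRing (Module.End S X)] {A B L : Submodule S X}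

/-- Split the surjection `A × B → X`: the identity of `X` is then a sum of an endomorphism with
image in `A` and one with image in `B`, and one of the two is a unit. -/
lemma eq_top_or_eq_top_of_sup_eq_top (h : A ⊔ B = ⊤) : A = ⊤ ∨ B = ⊤ := by
  have hsurj : Surjective (A.subtype.coprod B.subtype) := by
    rw [← LinearMap.range_eq_top, ← Submodule.sup_eq_range, h]
  obtain ⟨s, hs⟩ := Module.projective_lifting_property _ LinearMap.id hsurj
  have hsum : (A.subtype ∘ₗ .fst S A B ∘ₗ s : Module.End S X) +
      B.subtype ∘ₗ .snd S A B ∘ₗ s = 1 := by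
    rw [Module.End.one_eq_id, ← hs]
    rfl
  have eq_top (C : Submodule S X) (t : X →ₗ[S] C)
      (hu : IsUnit (C.subtype ∘ₗ t : Module.End S X)) : C = ⊤ := by
    rw [Submodule.eq_top_iff']
    intro x
    obtain ⟨y, rfl⟩ := ((Module.End.isUnit_iff _).1 hu).2 x
    exact (t y).2
  exact (IsLocalRing.isUnit_or_isUnit_of_add_one hsum).imp (eq_top A _) (eq_top B _)

lemma isIndecomposable_quotient (hL : L ≠ ⊤) : IsIndecomposable S (X ⧸ L) := by
  refine ⟨Submodule.Quotient.nontrivial_iff.2 hL, fun A B hAB => ?_⟩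
  have hsurj := L.mkQ_surjective
  have hsup : A.comap L.mkQ ⊔ B.comap L.mkQ = ⊤ := calc
    A.comap L.mkQ ⊔ B.comap L.mkQ
        = ((A.comap L.mkQ ⊔ B.comap L.mkQ).map L.mkQ).comap L.mkQ :=
          (Submodule.comap_map_eq_self
            (le_sup_of_le_left (LinearMap.ker_le_comap L.mkQ))).symm
    _ = ⊤ := by
      rw [Submodule.map_sup_comap_of_surjective hsurj, hAB.sup_eq_top, Submodule.comap_top]
  have eq_top (C : Submodule S (X ⧸ L)) (hC : C.comap L.mkQ = ⊤) : C = ⊤ :=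
    Submodule.comap_injective_of_surjective hsurj (hC.trans (Submodule.comap_top _).symm)
  rcases eq_top_or_eq_top_of_sup_eq_top hsup with hA | hB
  · exact Or.inr (eq_bot_of_top_isCompl (eq_top A hA ▸ hAB))
  · exact Or.inl (eq_bot_of_isCompl_top (eq_top B hB ▸ hAB))

lemma eq_bot_of_projective_quotient [Module.Projective S (X ⧸ L)] (hL : L ≠ ⊤) : L = ⊥ := by
  obtain ⟨s, hs⟩ := Module.projective_lifting_property L.mkQ LinearMap.id L.mkQ_surjective
  have hcompl : IsCompl (LinearMap.range s) L := by
    simpa using isCompl_range_ker_of_comp_eq_id hs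
  have htop := (eq_top_or_eq_top_of_sup_eq_top hcompl.sup_eq_top).resolve_right hL
  exact eq_bot_of_top_isCompl (htop ▸ hcompl)

end Quotients

lemma isEmpty_quotient_equiv_quotient_of_lt [IsNoetherian S X] {L L' : Submodule S X}
    (h : L < L') : IsEmpty ((X ⧸ L') ≃ₗ[S] X ⧸ L) where
  false e := by
    have hinj : Injective (e.toLinearMap ∘ₗ Submodule.factor h.le) :=
      IsNoetherian.injective_of_surjective_endomorphism _
        (e.surjective.comp (Submodule.factor_surjective h.le))
    refine h.not_ge fun x hx => ?_
    rw [← Submodule.Quotient.mk_eq_zero] at hx ⊢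
    exact hinj (by simp [hx])

/-! ### Multiplicities -/

section Multiplicity

variable [IsLocalRing (Module.End S X)]

variable (S X M) in
/-- The radical of `Hom(M, X)` for a module `X` with local endomorphism ring: the homomorphisms
`M → X` that are not split epimorphisms, as a submodule over `End X`. -/
def radHom : Submodule (Module.End S X) (M →ₗ[S] X) where
  carrier := {g | ∀ f : X →ₗ[S] M, g ∘ₗ f ≠ LinearMap.id}
  zero_mem' f h := zero_ne_one (α := Module.End S X) (by rw [← LinearMap.zero_comp f, h]; rfl)
  add_mem' {a b} ha hb f h := by
    have hsum : (a ∘ₗ f : Module.End S X) + b ∘ₗ f = 1 := by rw [← LinearMap.add_comp, h]; rfl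
    rcases IsLocalRing.isUnit_or_isUnit_of_add_one hsum with hu | hu
    · exact (exists_comp_eq_id_of_isUnit hu).elim ha
    · exact (exists_comp_eq_id_of_isUnit hu).elim hb
  smul_mem' c g hg f h := by
    have := isDedekindFiniteMonoid_of_isLocalRing (Module.End S X)
    exact hg (f ∘ₗ c) (mul_eq_one_comm.1 (show c * (g ∘ₗ f) = 1 from h))

lemma mem_radHom {g : M →ₗ[S] X} :
    g ∈ radHom S X M ↔ ∀ f : X →ₗ[S] M, g ∘ₗ f ≠ LinearMap.id :=
  Iff.rfl

lemma comp_mem_radHom {g : N →ₗ[S] X} (hg : g ∈ radHom S X N) (h : M →ₗ[S] N) :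
    g ∘ₗ h ∈ radHom S X M :=
  fun f => hg (h ∘ₗ f)

lemma mem_radHom_prod {g : M × N →ₗ[S] X} :
    g ∈ radHom S X (M × N) ↔
      g ∘ₗ .inl S M N ∈ radHom S X M ∧ g ∘ₗ .inr S M N ∈ radHom S X N := by
  refine ⟨fun hg => ⟨comp_mem_radHom hg _, comp_mem_radHom hg _⟩, fun ⟨hM, hN⟩ => ?_⟩
  have hg : g = (g ∘ₗ .inl S M N) ∘ₗ .fst S M N + (g ∘ₗ .inr S M N) ∘ₗ .snd S M N := by
    exact LinearMap.ext fun x => by simp [← map_add]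
  rw [hg]
  exact add_mem (comp_mem_radHom hM _) (comp_mem_radHom hN _)

variable (S X M) in
/-- The multiplicity of `X` as a direct summand of `M`, for a module `X` with local endomorphism
ring. It is encoded as the length of `Hom(M, X) / rad(M, X)` over `End X`, which is additive in `M`
without appeal to the Krull–Schmidt theorem. -/
noncomputable def summandMultiplicity : ℕ∞ :=
  Module.length (Module.End S X) ((M →ₗ[S] X) ⧸ radHom S X M)

lemma summandMultiplicity_eq_zero_iff : summandMultiplicity S X M = 0 ↔ ¬IsRetract S X M := by
  rw [summandMultiplicity, Module.length_eq_zero_iff, Submodule.Quotient.subsingleton_iff,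
    Submodule.eq_top_iff', IsRetract]
  simp only [mem_radHom]
  grind

lemma summandMultiplicity_congr (e : M ≃ₗ[S] N) :
    summandMultiplicity S X M = summandMultiplicity S X N := by
  refine (Submodule.Quotient.equiv _ _ (e.congrLeft X (Module.End S X)) ?_).length_eq
  rw [Submodule.map_equiv_eq_comap_symm]
  ext g
  refine ⟨fun hg => ?_, fun hg => comp_mem_radHom hg e.toLinearMap⟩
  simpa [LinearMap.comp_assoc] using
    comp_mem_radHom (show g ∘ₗ e.toLinearMap ∈ radHom S X M from hg) e.symm.toLinearMap

lemma summandMultiplicity_prod :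
    summandMultiplicity S X (M × N) = summandMultiplicity S X M + summandMultiplicity S X N := by
  let F : (M × N →ₗ[S] X) →ₗ[Module.End S X]
      ((M →ₗ[S] X) ⧸ radHom S X M) × ((N →ₗ[S] X) ⧸ radHom S X N) :=
    (radHom S X M).mkQ.prodMap (radHom S X N).mkQ ∘ₗ
      (LinearMap.coprodEquiv (Module.End S X)).symm.toLinearMap
  have hF : Surjective F :=
    ((radHom S X M).mkQ_surjective.prodMap (radHom S X N).mkQ_surjective).comp
      (LinearEquiv.surjective _)
  have hker : LinearMap.ker F = radHom S X (M × N) := by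
    ext g
    simp [F, mem_radHom_prod]
  rw [summandMultiplicity, ← hker, (F.quotKerEquivOfSurjective hF).length_eq, Module.length_prod]
  rfl

lemma summandMultiplicity_self : summandMultiplicity S X X = 1 := by
  have := isDedekindFiniteMonoid_of_isLocalRing (Module.End S X)
  rw [summandMultiplicity, Module.length_eq_one_iff, isSimpleModule_iff_isCoatom]
  refine ⟨fun h => ?_, fun I hI => ?_⟩
  · have hid : LinearMap.id ∈ radHom S X X := h ▸ Submodule.mem_top
    exact hid LinearMap.id rfl
  · obtain ⟨g, hgI, hg⟩ := SetLike.exists_of_lt hI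
    obtain ⟨f, hgf⟩ : ∃ f : X →ₗ[S] X, g ∘ₗ f = LinearMap.id := by
      simpa [mem_radHom] using hg
    rw [Submodule.eq_top_iff']
    intro k
    have hfg : f ∘ₗ g = LinearMap.id := mul_eq_one_comm.1 (show g * f = 1 from hgf)
    have hk : (k ∘ₗ f : Module.End S X) • g = k := by
      change (k ∘ₗ f) ∘ₗ g = k
      rw [LinearMap.comp_assoc, hfg, LinearMap.comp_id]
    exact hk ▸ I.smul_mem _ hgI

end Multiplicity

end Modules


/-! ### The Igusa–Todorov group -/

section IgusaTodorov

variable {R}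

/-- A submodule of a finitely generated module over a right noetherian ring, as an object of
`FGMod R`. -/
abbrev FGMod.sub [IsNoetherianRing Rᵐᵒᵖ] {M : FGMod R} (L : Submodule Rᵐᵒᵖ M) : FGMod R := ⟨L⟩

/-- A quotient of a finitely generated module, as an object of `FGMod R`. -/
abbrev FGMod.quot {M : FGMod R} (L : Submodule Rᵐᵒᵖ M) : FGMod R := ⟨M ⧸ L⟩

lemma FGMod.isSummand_iff_isRetract {N M : FGMod R} : N.IsSummand M ↔ IsRetract Rᵐᵒᵖ N M := by
  constructor
  · rintro ⟨A, B, hAB, ⟨e⟩⟩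
    exact (isRetract_of_linearEquiv e).trans
      (isRetract_prod_left.trans (isRetract_of_linearEquiv (A.prodEquivOfIsCompl B hAB)))
  · rintro ⟨f, g, hgf⟩
    have hinv : LeftInverse g f := LinearMap.congr_fun hgf
    exact ⟨_, _, isCompl_range_ker_of_comp_eq_id hgf, ⟨.ofInjective f hinv.injective⟩⟩

lemma ITcls_eq_zero_of_proj {P : FGMod R} (hP : P.Proj) : ITcls R P = 0 :=
  (QuotientAddGroup.eq_zero_iff (FreeAbelianGroup.of P)).2
    (AddSubgroup.subset_closure (Or.inr ⟨P, hP, rfl⟩))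

lemma ITcls_eq_add {A B C : FGMod R} (e : A ≃ₗ[Rᵐᵒᵖ] B × C) :
    ITcls R A = ITcls R B + ITcls R C := by
  have hrel : ITcls R A - ITcls R B - ITcls R C = 0 := by
    refine (QuotientAddGroup.eq_zero_iff
      (FreeAbelianGroup.of A - FreeAbelianGroup.of B - FreeAbelianGroup.of C)).2 ?_
    exact AddSubgroup.subset_closure (Or.inl ⟨A, B, C, ⟨e⟩, rfl⟩)
  rwa [sub_sub, sub_eq_zero] at hrel

lemma ITcls_congr {A B : FGMod R} (e : A ≃ₗ[Rᵐᵒᵖ] B) : ITcls R A = ITcls R B := by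
  let Z : FGMod R := ⟨PUnit.{u + 1}⟩
  have hZ : Z.Proj := inferInstanceAs (Module.Projective Rᵐᵒᵖ PUnit.{u + 1})
  have e' : A ≃ₗ[Rᵐᵒᵖ] B × Z := e.trans (LinearEquiv.prodUnique (M₂ := PUnit.{u + 1})).symm
  rw [ITcls_eq_add e', ITcls_eq_zero_of_proj hZ, add_zero]

lemma ITcls_sub_sup [IsNoetherianRing Rᵐᵒᵖ] {M : FGMod R} {L₁ L₂ : Submodule Rᵐᵒᵖ M}
    (h : Disjoint L₁ L₂) :
    ITcls R (.sub (L₁ ⊔ L₂)) = ITcls R (.sub L₁) + ITcls R (.sub L₂) := by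
  have hinj : Injective (L₁.subtype.coprod L₂.subtype) := by
    rw [← LinearMap.ker_eq_bot, LinearMap.ker_coprod_of_disjoint_range _ _ (by simpa using h)]
    simp
  exact ITcls_eq_add
    ((LinearEquiv.ofEq _ _ (Submodule.sup_eq_range L₁ L₂)).trans (.symm (.ofInjective _ hinj)))

/-- The universal property of the Igusa–Todorov group `K`: a function on finitely generated modules
that is additive on direct sums and vanishes on projectives factors through `K`. -/
noncomputable def ITK.lift {G : Type*} [AddCommGroup G] (f : FGMod R → G)
    (hadd : ∀ A B C : FGMod R, (A ≃ₗ[Rᵐᵒᵖ] B × C) → f A = f B + f C)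
    (hproj : ∀ P : FGMod R, P.Proj → f P = 0) : ITK R →+ G :=
  QuotientAddGroup.lift (AddSubgroup.closure (ITRel R)) (FreeAbelianGroup.lift f) <| by
    rw [AddSubgroup.closure_le]
    rintro _ (⟨A, B, C, ⟨e⟩, rfl⟩ | ⟨P, hP, rfl⟩)
    · simp [hadd A B C e]
    · simp [hproj P hP]

lemma ITK.lift_ITcls {G : Type*} [AddCommGroup G] (f : FGMod R → G)
    (hadd : ∀ A B C : FGMod R, (A ≃ₗ[Rᵐᵒᵖ] B × C) → f A = f B + f C)
    (hproj : ∀ P : FGMod R, P.Proj → f P = 0) (M : FGMod R) :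
    ITK.lift f hadd hproj (ITcls R M) = f M :=
  FreeAbelianGroup.lift_apply_of f M

section Artinian

variable [IsArtinianRing Rᵐᵒᵖ]

@[elab_as_elim]
theorem FGMod.induction_on_indec {p : FGMod R → Prop} (M : FGMod R)
    (subsingleton : ∀ M : FGMod R, Subsingleton M → p M)
    (indec : ∀ M : FGMod R, M.Indec → p M)
    (prod : ∀ M A B : FGMod R, (M ≃ₗ[Rᵐᵒᵖ] A × B) → p A → p B → p M) : p M := by
  induction hn : Module.length Rᵐᵒᵖ M using WellFoundedLT.induction generalizing M with
  | ind n ih =>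
    rcases subsingleton_or_nontrivial M with hM | hM
    · exact subsingleton M hM
    by_cases hind : M.Indec
    · exact indec M hind
    obtain ⟨A, B, hAB, hA, hB⟩ : ∃ A B : Submodule Rᵐᵒᵖ M, IsCompl A B ∧ A ≠ ⊥ ∧ B ≠ ⊥ := by
      simpa [FGMod.Indec, hM] using hind
    have of_ne_top (L : Submodule Rᵐᵒᵖ M) (hL : L ≠ ⊤) : p (.sub L) :=
      ih _ (hn ▸ Submodule.length_lt hL) _ rfl
    exact prod M (.sub A) (.sub B) (A.prodEquivOfIsCompl B hAB).symm
      (of_ne_top A fun h => hB (eq_bot_of_top_isCompl (h ▸ hAB)))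
      (of_ne_top B fun h => hA (eq_bot_of_isCompl_top (h ▸ hAB)))

lemma summandMultiplicity_ne_top (X M : FGMod R) [IsLocalRing (Module.End Rᵐᵒᵖ X)] :
    summandMultiplicity Rᵐᵒᵖ X M ≠ ⊤ := by
  have hX : Nontrivial X :=
    not_subsingleton_iff_nontrivial.1 fun _ => not_subsingleton (Module.End Rᵐᵒᵖ X) inferInstance
  induction M using FGMod.induction_on_indec with
  | subsingleton M hM => simp [summandMultiplicity_eq_zero_iff.2 not_isRetract_of_subsingleton]
  | indec M hM =>
    by_cases h : IsRetract Rᵐᵒᵖ X M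
    · obtain ⟨e⟩ := h.nonempty_equiv hM
      simp [← summandMultiplicity_congr e, summandMultiplicity_self]
    · simp [summandMultiplicity_eq_zero_iff.2 h]
  | prod M A B e hA hB =>
    rw [summandMultiplicity_congr e, summandMultiplicity_prod]
    exact WithTop.add_ne_top.2 ⟨hA, hB⟩

/-- The homomorphism `K → ℤ` sending `[M]` to the multiplicity of the non-projective module `X` as a
direct summand of `M`. -/
noncomputable def ITK.multiplicity (X : FGMod R) [IsLocalRing (Module.End Rᵐᵒᵖ X)]
    (hX : ¬X.Proj) : ITK R →+ ℤ :=
  ITK.lift (fun M => ((summandMultiplicity Rᵐᵒᵖ X M).toNat : ℤ))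
    (fun A B C e => by
      rw [summandMultiplicity_congr e, summandMultiplicity_prod,
        ENat.toNat_add (summandMultiplicity_ne_top X B) (summandMultiplicity_ne_top X C),
        Nat.cast_add])
    fun P (hP : Module.Projective Rᵐᵒᵖ P) => by
      simp [summandMultiplicity_eq_zero_iff.2 fun h => hX h.projective]

lemma ITK.multiplicity_ITcls {X : FGMod R} [IsLocalRing (Module.End Rᵐᵒᵖ X)] (hX : ¬X.Proj)
    (M : FGMod R) :
    ITK.multiplicity X hX (ITcls R M) = (summandMultiplicity Rᵐᵒᵖ X M).toNat :=
  ITK.lift_ITcls ..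

lemma finite_setOf_ITcls_indec_isRetract (M : FGMod R) :
    {x | ∃ N : FGMod R, IsRetract Rᵐᵒᵖ N M ∧ N.Indec ∧ x = ITcls R N}.Finite := by
  induction M using FGMod.induction_on_indec with
  | subsingleton M hM =>
    refine Set.finite_empty.subset ?_
    rintro _ ⟨N, hNM, ⟨hN, -⟩, -⟩
    exact not_isRetract_of_subsingleton hNM
  | indec M hM =>
    refine (Set.finite_singleton (ITcls R M)).subset ?_
    rintro _ ⟨N, hNM, ⟨hN, -⟩, rfl⟩
    obtain ⟨e⟩ := hNM.nonempty_equiv hM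
    exact ITcls_congr e
  | prod M A B e hA hB =>
    refine (hA.union hB).subset ?_
    rintro _ ⟨N, hNM, hN, rfl⟩
    have := IsIndecomposable.isLocalRing_end hN
    exact (hNM.trans (isRetract_of_linearEquiv e)).of_prod.imp
      (⟨N, ·, hN, rfl⟩) (⟨N, ·, hN, rfl⟩)

instance finite_toIntSubmodule_ITgen (M : FGMod R) :
    Module.Finite ℤ (ITgen R M).toIntSubmodule := by
  refine Module.Finite.iff_fg.2 ((Submodule.fg_iff_addSubgroup_fg _).2 ((AddSubgroup.fg_iff _).2
    ⟨_, rfl, (finite_setOf_ITcls_indec_isRetract M).subset ?_⟩))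
  rintro _ ⟨N, hNM, hN, -, rfl⟩
  exact ⟨N, FGMod.isSummand_iff_isRetract.1 hNM, hN, rfl⟩

end Artinian

/-! ### Ranks and the Igusa–Todorov function -/

lemma exists_smul_eq_zero_of_finrank_map_eq {A V W : Type*} [CommRing A] [IsDomain A]
    [IsNoetherianRing A] [AddCommGroup V] [Module A V] [AddCommGroup W] [Module A W]
    {f : V →ₗ[A] W} {p : Submodule A V} [Module.Finite A p] (h : finrank A (p.map f) = finrank A p)
    {x : V} (hx : x ∈ p) (hfx : f x = 0) : ∃ a : A, a ≠ 0 ∧ a • x = 0 := by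
  have hrank := Submodule.finrank_quotient_add_finrank (LinearMap.ker (f.domRestrict p))
  rw [(f.domRestrict p).quotKerEquivRange.finrank_eq, LinearMap.range_domRestrict, h,
    Nat.add_eq_left, Module.finrank_eq_zero_iff] at hrank
  obtain ⟨a, ha, hax⟩ := hrank ⟨⟨x, hx⟩, hfx⟩
  exact ⟨a, ha, by simpa [Subtype.ext_iff] using hax⟩

lemma rkIT_map_le (H : AddSubgroup (ITK R)) [Module.Finite ℤ H.toIntSubmodule]
    (f : ITK R →+ ITK R) : rkIT R (H.map f) ≤ rkIT R H :=
  Submodule.finrank_map_le f.toIntLinearMap H.toIntSubmodule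

/-- The rank of `Ω^i⟨M⟩`. The value `φ(M)` is the first index from which on this sequence is
constant. -/
noncomputable def syzygyRank (OmK : AddMonoid.End (ITK R)) (M : FGMod R) (i : ℕ) : ℕ :=
  rkIT R ((ITgen R M).map ((OmK ^ i : AddMonoid.End (ITK R)) : ITK R →+ ITK R))

variable {OmK : AddMonoid.End (ITK R)} {M : FGMod R}

lemma syzygyRank_zero : syzygyRank OmK M 0 = rkIT R (ITgen R M) :=
  congrArg (rkIT R) (AddSubgroup.map_id _)

lemma syzygyRank_one : syzygyRank OmK M 1 = rkIT R ((ITgen R M).map OmK) := by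
  rw [syzygyRank, pow_one]

section FiniteITgen

variable [Module.Finite ℤ (ITgen R M).toIntSubmodule]

lemma antitone_syzygyRank : Antitone (syzygyRank OmK M) := by
  refine antitone_nat_of_succ_le fun i => ?_
  let f : ITK R →+ ITK R := OmK ^ i
  have : Module.Finite ℤ ((ITgen R M).map f).toIntSubmodule :=
    inferInstanceAs (Module.Finite ℤ ((ITgen R M).toIntSubmodule.map f.toIntLinearMap))
  rw [syzygyRank, pow_succ']
  exact (congrArg (rkIT R) (AddSubgroup.map_map _ OmK f).symm).trans_le (rkIT_map_le _ OmK)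

lemma syzygyRank_eq_of_phiIT_le {i : ℕ} (hi : phiIT R OmK M ≤ i) :
    syzygyRank OmK M i = syzygyRank OmK M (phiIT R OmK M) := by
  obtain ⟨n, hn⟩ :=
    WellFoundedLT.antitone_chain_condition (antitone_syzygyRank (OmK := OmK) (M := M))
  have hne : {n | ∀ i, n ≤ i → syzygyRank OmK M i = syzygyRank OmK M n}.Nonempty :=
    ⟨n, fun i hi => (hn i hi).symm⟩
  exact Nat.sInf_mem hne i hi

lemma isOfFinAddOrder_of_phiIT_eq_zero (hphi : phiIT R OmK M = 0) {x : ITK R}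
    (hx : x ∈ ITgen R M) (hOmx : OmK x = 0) : IsOfFinAddOrder x := by
  have hrank : rkIT R ((ITgen R M).map OmK) = rkIT R (ITgen R M) := by
    rw [← syzygyRank_one, syzygyRank_eq_of_phiIT_le (hphi.trans_le zero_le_one), hphi,
      syzygyRank_zero]
  obtain ⟨a, ha, hax⟩ := exists_smul_eq_zero_of_finrank_map_eq
    (f := AddMonoidHom.toIntLinearMap OmK) (p := (ITgen R M).toIntSubmodule) hrank hx hOmx
  exact isOfFinAddOrder_iff_zsmul_eq_zero.2 ⟨a, ha, hax⟩

end FiniteITgen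

/-! ### Disjoint submodules of an indecomposable projective module -/

section IndecomposableProjective

variable {P : FGMod R} [Module.Projective Rᵐᵒᵖ P] [IsLocalRing (Module.End Rᵐᵒᵖ P)]
  {L L₁ L₂ : Submodule Rᵐᵒᵖ P}

lemma not_proj_quot (hbot : L ≠ ⊥) (htop : L ≠ ⊤) : ¬(FGMod.quot L).Proj :=
  fun _ : Module.Projective Rᵐᵒᵖ (P ⧸ L) => hbot (eq_bot_of_projective_quotient htop)

lemma ITcls_quot_mem_ITgen (hbot : L ≠ ⊥) (htop : L ≠ ⊤)
    (hM : IsRetract Rᵐᵒᵖ (P ⧸ L) M) : ITcls R (.quot L) ∈ ITgen R M :=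
  AddSubgroup.subset_closure ⟨.quot L, FGMod.isSummand_iff_isRetract.2 hM,
    isIndecomposable_quotient htop, not_proj_quot hbot htop, rfl⟩

variable [IsArtinianRing Rᵐᵒᵖ]

lemma isSyzygy_quot_sub (hL : L ≠ ⊤) : IsSyzygy (.quot L) (.sub L) := by
  have hproj : P.Proj := inferInstanceAs (Module.Projective Rᵐᵒᵖ P)
  refine ⟨P, L.mkQ, ⟨hproj, L.mkQ_surjective, fun N hN => ?_⟩, ⟨.ofEq _ _ L.ker_mkQ.symm⟩⟩
  have hsup : N ⊔ L = ⊤ := by rw [← hN]; exact congrArg (N ⊔ ·) L.ker_mkQ.symm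
  exact (eq_top_or_eq_top_of_sup_eq_top hsup).resolve_right hL

lemma not_isOfFinAddOrder_ITcls_quot (hL : L ≠ ⊤) (h₁ : L₁ < L) (h₂ : L₂ < L) :
    ¬IsOfFinAddOrder (ITcls R (.quot L₁) + ITcls R (.quot L₂) - ITcls R (.quot L)) := by
  have hind : IsIndecomposable Rᵐᵒᵖ (P ⧸ L) := isIndecomposable_quotient hL
  have : IsLocalRing (Module.End Rᵐᵒᵖ (P ⧸ L)) := hind.isLocalRing_end
  have hzero (L' : Submodule Rᵐᵒᵖ P) (h : L' < L) :
      summandMultiplicity Rᵐᵒᵖ (P ⧸ L) (P ⧸ L') = 0 := by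
    rw [summandMultiplicity_eq_zero_iff]
    intro hretract
    have := hind.1
    exact not_nonempty_iff.2 (isEmpty_quotient_equiv_quotient_of_lt h)
      (hretract.nonempty_equiv (isIndecomposable_quotient (h.trans_le le_top).ne))
  intro hfin
  have hmult := (AddMonoidHom.isOfFinAddOrder
    (ITK.multiplicity (.quot L) (not_proj_quot h₁.ne_bot hL)) hfin).eq_zero'
  simp [ITK.multiplicity_ITcls, hzero L₁ h₁, hzero L₂ h₂, summandMultiplicity_self] at hmult

theorem eq_bot_or_eq_bot_of_disjoint_of_phiIT_eq_zero (hOm : IsSyzygyEnd R OmK)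
    (hphi : ∀ M : FGMod R, phiIT R OmK M = 0) (h : Disjoint L₁ L₂) : L₁ = ⊥ ∨ L₂ = ⊥ := by
  by_contra! ⟨h₁, h₂⟩
  have hlt₁ : L₁ < L₁ ⊔ L₂ := left_lt_sup.2 fun hle => h₂ (h.eq_bot_of_ge hle)
  have hlt₂ : L₂ < L₁ ⊔ L₂ := right_lt_sup.2 fun hle => h₁ (h.eq_bot_of_le hle)
  have htop : L₁ ⊔ L₂ ≠ ⊤ := fun hsup =>
    (eq_top_or_eq_top_of_sup_eq_top hsup).elim hlt₁.ne_top hlt₂.ne_top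
  let M : FGMod R := ((FGMod.quot L₁).prod (.quot L₂)).prod (.quot (L₁ ⊔ L₂))
  have hmem : ITcls R (.quot L₁) + ITcls R (.quot L₂) - ITcls R (.quot (L₁ ⊔ L₂)) ∈ ITgen R M :=
    sub_mem
      (add_mem
        (ITcls_quot_mem_ITgen h₁ hlt₁.ne_top (isRetract_prod_left.trans isRetract_prod_left))
        (ITcls_quot_mem_ITgen h₂ hlt₂.ne_top (isRetract_prod_right.trans isRetract_prod_left)))
      (ITcls_quot_mem_ITgen hlt₁.ne_bot htop isRetract_prod_right)
  have hker : OmK (ITcls R (.quot L₁) + ITcls R (.quot L₂) - ITcls R (.quot (L₁ ⊔ L₂))) = 0 := by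
    rw [map_sub, map_add, hOm _ _ (isSyzygy_quot_sub hlt₁.ne_top),
      hOm _ _ (isSyzygy_quot_sub hlt₂.ne_top), hOm _ _ (isSyzygy_quot_sub htop),
      ITcls_sub_sup h, sub_self]
  exact not_isOfFinAddOrder_ITcls_quot htop hlt₁ hlt₂
    (isOfFinAddOrder_of_phiIT_eq_zero (hphi M) hmem hker)

end IndecomposableProjective

end IgusaTodorov

/-- If `φ-dim(R) = 0`, then every indecomposable projective right
`R`-module has simple socle. -/
theorem simple_socle_of_phidim_eq_zero (R : Type u) [Ring R] [IsArtinianRing Rᵐᵒᵖ]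
    (OmK : AddMonoid.End (ITK R)) (hOm : IsSyzygyEnd R OmK)
    (hphi : ∀ M : FGMod R, phiIT R OmK M = 0)
    (P : FGMod R) (hind : P.Indec) (hproj : P.Proj) :
    IsSimpleModule Rᵐᵒᵖ (socleIT R P) := by
  have : Nontrivial P := hind.1
  have : Module.Projective Rᵐᵒᵖ P := hproj
  have : IsLocalRing (Module.End Rᵐᵒᵖ P) := IsIndecomposable.isLocalRing_end hind
  have hsocle : socleIT R P = sSup {L | IsAtom L} :=
    congrArg sSup (Set.ext fun _ => isSimpleModule_iff_isAtom)
  rw [hsocle, isSimpleModule_iff_isAtom]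
  exact isAtom_sSup_setOf_isAtom fun L₁ L₂ =>
    eq_bot_or_eq_bot_of_disjoint_of_phiIT_eq_zero hOm hphi
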